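/- Let N ≥ 1, 0 < s < 1, and let G be an Orlicz function satisfying hypotheses (H) with index p. Let u ∈ C¹(ℝ^N). Then for every x ∈ ℝ^N, liminf_{δ→0⁺} [p(1−s)/G(δ^{1−s})] ∫_{B(x,δ)} G(|u(x)−u(y)|/|x−y|^s) |x−y|^{−N} dy ≥ K_{N,p} |∇u(x)|^p. -/

import Mathlib

/-!
The substitution `y = x + δ z` turns the energy density on `B(x, δ)` into an integral over the
fixed unit ball. With `T = δ ^ (1 - s)`, its integrand is
`p (1 - s) ‖z‖ ^ (-N) * G (T * A_δ(z)) / G T`, where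
`A_δ(z) = |u x - u (x + δ z)| / (δ ‖z‖ ^ s)` tends to `|⟪z, ∇u x⟫| / ‖z‖ ^ s` (`tendsto_slope`).
Regular variation and monotonicity of `G` bound the lower limit of the integrand from below by
`p (1 - s) ‖z‖ ^ (-N) * (|⟪z, ∇u x⟫| / ‖z‖ ^ s) ^ p` (`ofReal_le_liminf_ratio`), and Fatou's lemma
passes to the integral. Polar coordinates and a reflection aligning `∇u x` with `e` evaluate the
integral of this limiting kernel as `K_{N,p} ‖∇u x‖ ^ p` (`lintegral_kernel_rotate`).
-/

open MeasureTheory Metric Filter Set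
open scoped ENNReal RealInnerProductSpace Topology NNReal

noncomputable section

/-- Euclidean space `ℝ^N`. -/
abbrev Euc (N : ℕ) := EuclideanSpace ℝ (Fin N)

/-- `G : [0,∞) → [0,∞)` is an Orlicz function: continuous, convex, increasing,
`G 0 = 0`, superlinear at `0`, and satisfying the Δ₂ condition. -/
def IsOrlicz (G : ℝ → ℝ) : Prop :=
  (∀ t, 0 ≤ t → 0 ≤ G t) ∧
  ContinuousOn G (Set.Ici 0) ∧
  ConvexOn ℝ (Set.Ici 0) G ∧
  StrictMonoOn G (Set.Ici 0) ∧
  G 0 = 0 ∧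
  Tendsto (fun t => G t / t) (𝓝[>] (0:ℝ)) (𝓝 0) ∧
  ∃ c > 2, ∀ t ≥ (0:ℝ), G (2 * t) ≤ c * G t

/-- `f` is regularly varying at `0` (from the right) with index `ρ`. -/
def RegVaryAtZero (f : ℝ → ℝ) (ρ : ℝ) : Prop :=
  ∀ lam > (0:ℝ), Tendsto (fun t => f (lam * t) / f t) (𝓝[>] (0:ℝ)) (𝓝 (lam ^ ρ))

/-- Hypotheses (H): `G` is a (piecewise) smooth Orlicz function, regularly varying at `0`
of index `p`, its derivative is regularly varying at `0` of index `p - 1`, and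
`ℓ(t) = G(t)/t^p` is bounded below by a positive constant. -/
def HypH (G : ℝ → ℝ) (p : ℝ) : Prop :=
  IsOrlicz G ∧ RegVaryAtZero G p ∧
  (∃ g : ℝ → ℝ, (∀ t > (0:ℝ), HasDerivAt G (g t) t) ∧ RegVaryAtZero g (p - 1)) ∧
  ∃ c > (0:ℝ), ∀ t > (0:ℝ), c ≤ G t / t ^ p

/-- The modular `Φ_G(u) = ∫_{ℝ^N} G(|u|) dx`. -/
def PhiG (N : ℕ) (G : ℝ → ℝ) (u : Euc N → ℝ) : ℝ≥0∞ :=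
  ∫⁻ x, ENNReal.ofReal (G |u x|)

/-- The truncated nonlocal energy
`Ψ_{s,G,δ}(u) = ∫_{ℝ^N} ∫_{B(x,δ)} G(|u(x)-u(y)|/|x-y|^s) |x-y|^{-N} dy dx`. -/
def PsiG (N : ℕ) (s δ : ℝ) (G : ℝ → ℝ) (u : Euc N → ℝ) : ℝ≥0∞ :=
  ∫⁻ x, ∫⁻ y in ball x δ,
    ENNReal.ofReal (G (|u x - u y| / ‖x - y‖ ^ s) / ‖x - y‖ ^ (N : ℝ))

/-- `V` is the weak gradient of `u`:
`∫ u ∂φ/∂xᵢ = -∫ Vᵢ φ` for every test function `φ ∈ C_c^∞` and every `i`. -/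
def HasWeakGradient (N : ℕ) (u : Euc N → ℝ) (V : Euc N → Euc N) : Prop :=
  LocallyIntegrable u volume ∧ LocallyIntegrable V volume ∧
  ∀ φ : Euc N → ℝ, ContDiff ℝ (⊤ : ℕ∞) φ → HasCompactSupport φ → ∀ i : Fin N,
    ∫ x, u x * fderiv ℝ φ x (EuclideanSpace.single i 1) = -∫ x, V x i * φ x

/-- `K_{N,p} = ∫_{𝕊^{N-1}} |w·e|^p dσ(w)`, where `σ` is the surface measure on the
unit sphere of `ℝ^N`. -/
def sphereK (N : ℕ) (p : ℝ) (e : Euc N) : ℝ :=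
  ∫ w : sphere (0 : Euc N) 1, |(⟪(w : Euc N), e⟫)| ^ p
    ∂((volume : Measure (Euc N)).toSphere)

/-- Surface area of the unit sphere `𝕊^{N-1} ⊂ ℝ^N`. -/
def sphereArea (N : ℕ) : ℝ :=
  (((volume : Measure (Euc N)).toSphere) Set.univ).toReal

end

/-! ### Regular variation -/

lemma Orlicz.pos {G : ℝ → ℝ} (hG : IsOrlicz G) {t : ℝ} (ht : 0 < t) : 0 < G t := by
  obtain ⟨-, -, -, hmono, h0, -⟩ := hG
  simpa [h0] using hmono (mem_Ici.2 le_rfl) (mem_Ici.2 ht.le) ht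

/-- Convexity and `G 0 = 0` give `G (t / 2) ≤ G t / 2`, so `2 ^ (-p) ≤ 2⁻¹` in the limit. -/
lemma one_le_index {G : ℝ → ℝ} {p : ℝ} (hG : IsOrlicz G) (hR : RegVaryAtZero G p) : 1 ≤ p := by
  have hpos := fun t => Orlicz.pos hG (t := t)
  obtain ⟨-, -, hconv, -, h0, -⟩ := hG
  have h := hR (1 / 2) (by norm_num)
  have hle : ((1 : ℝ) / 2) ^ p ≤ 1 / 2 := by
    refine le_of_tendsto h ?_
    filter_upwards [self_mem_nhdsWithin] with t ht
    have ht : 0 < t := ht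
    rw [div_le_iff₀ (hpos t ht)]
    have := hconv.2 (mem_Ici.2 ht.le) (mem_Ici.2 le_rfl)
      (by norm_num : (0 : ℝ) ≤ 1 / 2) (by norm_num : (0 : ℝ) ≤ 1 / 2) (by norm_num)
    simpa [h0] using this
  by_contra! hp
  have : ((1 : ℝ) / 2) ^ (1 : ℝ) < (1 / 2) ^ p :=
    Real.rpow_lt_rpow_of_exponent_gt (by norm_num) (by norm_num) hp
  rw [Real.rpow_one] at this
  linarith

/-- Monotonicity of `G` replaces the uniform convergence theorem for regularly varying functions:
`A i` is eventually above any `m' < m`, and the ratio at `m'` tends to `m' ^ p`. -/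
lemma eventually_lt_ratio {G : ℝ → ℝ} {p : ℝ} (hG : IsOrlicz G) (hR : RegVaryAtZero G p)
    {ι : Type*} {l : Filter ι} {T A : ι → ℝ} {m b : ℝ} (hT : Tendsto T l (𝓝[>] 0))
    (hA : Tendsto A l (𝓝 m)) (hm : 0 < m) (hb : b < m ^ p) :
    ∀ᶠ i in l, b < G (T i * A i) / G (T i) := by
  obtain ⟨m', ⟨hm'b, hm'0⟩, hm'm⟩ : ∃ m', (b < m' ^ p ∧ 0 < m') ∧ m' < m := by
    have hc : ContinuousAt (fun t : ℝ => t ^ p) m :=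
      Real.continuousAt_rpow_const _ _ (Or.inl hm.ne')
    have h1 : ∀ᶠ t in 𝓝[<] m, b < t ^ p ∧ 0 < t :=
      ((hc.eventually (lt_mem_nhds hb)).and (lt_mem_nhds hm)).filter_mono nhdsWithin_le_nhds
    exact (h1.and self_mem_nhdsWithin).exists
  have hlim := ((hR m' hm'0).comp hT).eventually (lt_mem_nhds hm'b)
  filter_upwards [hlim, hT.eventually self_mem_nhdsWithin, hA.eventually (lt_mem_nhds hm'm)]
    with i h1 h2 h3
  have h2 : 0 < T i := h2
  refine h1.trans_le ?_
  have hle : m' * T i ≤ T i * A i := by nlinarith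
  have : G (m' * T i) ≤ G (T i * A i) :=
    hG.2.2.2.1.monotoneOn (mem_Ici.2 (by positivity)) (mem_Ici.2 (le_trans (by positivity) hle)) hle
  exact div_le_div_of_nonneg_right this (Orlicz.pos hG h2).le

lemma ofReal_le_liminf_ratio {G : ℝ → ℝ} {p : ℝ} (hG : IsOrlicz G) (hR : RegVaryAtZero G p)
    {ι : Type*} {l : Filter ι} {T A : ι → ℝ} {m C : ℝ} (hT : Tendsto T l (𝓝[>] 0))
    (hA : Tendsto A l (𝓝 m)) (hm : 0 ≤ m) (hC : 0 ≤ C) :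
    ENNReal.ofReal (C * m ^ p) ≤
      liminf (fun i => ENNReal.ofReal (C * (G (T i * A i) / G (T i)))) l := by
  rcases hm.eq_or_lt with rfl | hm
  · rw [Real.zero_rpow (by linarith [one_le_index hG hR])]
    simp
  have hlim : Tendsto (fun b => ENNReal.ofReal (C * b)) (𝓝[<] (m ^ p))
      (𝓝 (ENNReal.ofReal (C * m ^ p))) :=
    ((ENNReal.continuous_ofReal.comp (continuous_const.mul continuous_id)).tendsto
      (m ^ p)).mono_left nhdsWithin_le_nhds
  refine le_of_tendsto hlim ?_
  filter_upwards [self_mem_nhdsWithin] with b hb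
  refine le_liminf_of_le (by isBoundedDefault) ?_
  filter_upwards [eventually_lt_ratio hG hR hT hA hm hb] with i hi
  gcongr

/-! ### Dilations and polar coordinates -/

lemma setLIntegral_ball_dilate {N : ℕ} (x : Euc N) {δ : ℝ} (hδ : 0 < δ) {F : Euc N → ℝ≥0∞}
    (hF : Measurable F) :
    ∫⁻ y in ball x δ, F y =
      ENNReal.ofReal (δ ^ N) * ∫⁻ z in ball (0 : Euc N) 1, F (x + δ • z) := by
  have hind : Measurable ((ball x δ).indicator F) := hF.indicator measurableSet_ball
  have hmap := Measure.map_addHaar_smul (volume : Measure (Euc N)) hδ.ne'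
  have h1 : ∫⁻ z in ball (0 : Euc N) 1, F (x + δ • z) =
      ∫⁻ z, (fun y => (ball x δ).indicator F (x + y)) (δ • z) := by
    rw [← lintegral_indicator measurableSet_ball]
    refine lintegral_congr fun z => ?_
    have : z ∈ ball (0 : Euc N) 1 ↔ x + δ • z ∈ ball x δ := by
      simp [norm_smul, abs_of_pos hδ, hδ]
    by_cases h : z ∈ ball (0 : Euc N) 1
    · simp only [indicator_of_mem h, indicator_of_mem (this.1 h)]
    · simp only [indicator_of_notMem h, indicator_of_notMem (this.not.1 h)]
  rw [h1, ← lintegral_map (f := fun y => (ball x δ).indicator F (x + y))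
    (hind.comp (measurable_const_add x)) (measurable_const_smul δ), hmap, lintegral_smul_measure,
    lintegral_add_left_eq_self (μ := volume) ((ball x δ).indicator F) x,
    lintegral_indicator measurableSet_ball, smul_eq_mul, ← mul_assoc,
    ← ENNReal.ofReal_mul (by positivity)]
  simp [abs_of_pos hδ, hδ.ne']

lemma lintegral_radial {N : ℕ} (hN : 1 ≤ N) {q : ℝ} (hq : 0 < q) :
    ∫⁻ r : Ioi (0 : ℝ), (Iio (1 : ℝ)).indicator (fun r => ENNReal.ofReal (q * r ^ (q - N))) r
      ∂(Measure.volumeIoiPow (N - 1)) = 1 := by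
  have hm : Measurable ((Iio (1 : ℝ)).indicator fun r => ENNReal.ofReal (q * r ^ (q - N))) :=
    Measurable.indicator (by fun_prop) measurableSet_Iio
  rw [Measure.volumeIoiPow, lintegral_withDensity_eq_lintegral_mul _ (by fun_prop)
    (g := fun r : Ioi (0 : ℝ) =>
      (Iio (1 : ℝ)).indicator (fun r => ENNReal.ofReal (q * r ^ (q - N))) (r : ℝ))
    (hm.comp measurable_subtype_coe)]
  have h1 : ∀ r : Ioi (0 : ℝ), ((fun r : Ioi (0 : ℝ) => ENNReal.ofReal (r.1 ^ (N - 1))) *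
      fun r : Ioi (0 : ℝ) =>
        (Iio (1 : ℝ)).indicator (fun r => ENNReal.ofReal (q * r ^ (q - N))) (r : ℝ)) r =
      (fun r : ℝ => (Iio (1 : ℝ)).indicator (fun r => ENNReal.ofReal (q * r ^ (q - 1))) r) r := by
    rintro ⟨r, hr⟩
    have hr : 0 < r := hr
    by_cases h : r < 1
    · simp only [Pi.mul_apply, indicator_of_mem (mem_Iio.2 h)]
      rw [← ENNReal.ofReal_mul (by positivity), ← Real.rpow_natCast, Nat.cast_sub hN,
        mul_left_comm, ← Real.rpow_add hr]
      congr 3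
      push_cast
      ring
    · simp [h]
  rw [lintegral_congr h1, lintegral_subtype_comap measurableSet_Ioi
      (f := fun r : ℝ => (Iio (1 : ℝ)).indicator (fun r => ENNReal.ofReal (q * r ^ (q - 1))) r),
    lintegral_indicator measurableSet_Iio, Measure.restrict_restrict measurableSet_Iio,
    Iio_inter_Ioi, restrict_Ioo_eq_restrict_Ioc, ← ofReal_integral_eq_lintegral_ofReal,
    ← intervalIntegral.integral_of_le zero_le_one, intervalIntegral.integral_const_mul,
    integral_rpow (Or.inl (by linarith))]
  · simp [hq.ne']
  · exact ((intervalIntegral.intervalIntegrable_rpow' (by linarith)).const_mul q).1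
  · filter_upwards [ae_restrict_mem measurableSet_Ioc] with r hr
    have := hr.1
    positivity

/-- The limiting kernel integrates over the unit ball to the sphere constant: in polar coordinates
the radial factor is `∫₀¹ p (1 - s) r ^ (p (1 - s) - 1) dr = 1`. -/
lemma lintegral_kernel {N : ℕ} (hN : 1 ≤ N) {s p : ℝ} (hs1 : s < 1) (hp : 0 < p) (e : Euc N) :
    ∫⁻ z in ball (0 : Euc N) 1,
      ENNReal.ofReal (p * (1 - s) / ‖z‖ ^ (N : ℝ) * (|⟪z, e⟫| / ‖z‖ ^ s) ^ p) =
      ENNReal.ofReal (sphereK N p e) := by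
  have : Nonempty (Fin N) := ⟨⟨0, hN⟩⟩
  have : Nontrivial (Euc N) := inferInstance
  set q := p * (1 - s) with hq_def
  have hq : 0 < q := mul_pos hp (by linarith)
  set H : sphere (0 : Euc N) 1 → ℝ≥0∞ := fun w => ENNReal.ofReal (|⟪(w : Euc N), e⟫| ^ p) with hH
  set R : Ioi (0 : ℝ) → ℝ≥0∞ := fun r =>
    (Iio (1 : ℝ)).indicator (fun r => ENNReal.ofReal (q * r ^ (q - N))) (r : ℝ) with hR
  set F : Euc N → ℝ≥0∞ := fun z =>
    ENNReal.ofReal (q / ‖z‖ ^ (N : ℝ) * (|⟪z, e⟫| / ‖z‖ ^ s) ^ p) with hF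
  have hcont : Continuous fun w : sphere (0 : Euc N) 1 => |⟪(w : Euc N), e⟫| ^ p :=
    Continuous.rpow_const (by fun_prop) (fun _ => Or.inr hp.le)
  have hHm : Measurable H := hcont.measurable.ennreal_ofReal
  have hRm : Measurable R :=
    (Measurable.indicator (by fun_prop) measurableSet_Iio).comp measurable_subtype_coe
  have hpt : ∀ z : ({0}ᶜ : Set (Euc N)), (ball (0 : Euc N) 1).indicator F z =
      (fun wr : sphere (0 : Euc N) 1 × Ioi (0 : ℝ) => H wr.1 * R wr.2)
        (homeomorphUnitSphereProd (Euc N) z) := by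
    rintro ⟨z, hz⟩
    have hz0 : 0 < ‖z‖ := norm_pos_iff.2 hz
    by_cases h : ‖z‖ < 1
    · simp only [hH, hR, homeomorphUnitSphereProd_apply_snd_coe,
        homeomorphUnitSphereProd_apply_fst_coe]
      rw [indicator_of_mem (by simpa using h), indicator_of_mem (by simpa using h),
        ← ENNReal.ofReal_mul (by positivity), hF]
      dsimp only
      congr 1
      rw [real_inner_smul_left, abs_mul, abs_of_pos (inv_pos.2 hz0),
        Real.mul_rpow (by positivity) (by positivity),
        Real.div_rpow (by positivity) (by positivity), Real.inv_rpow hz0.le, ← Real.rpow_mul hz0.le,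
        Real.rpow_sub hz0, hq_def, mul_sub, mul_one, Real.rpow_sub hz0, mul_comm s p]
      field_simp
    · simp only [hR, homeomorphUnitSphereProd_apply_snd_coe]
      rw [indicator_of_notMem (by simpa using h), indicator_of_notMem (by simpa using h), mul_zero]
  have hdim : Module.finrank ℝ (Euc N) = N := by simp
  rw [← lintegral_indicator measurableSet_ball,
    ← restrict_compl_singleton (μ := (volume : Measure (Euc N))) 0,
    ← lintegral_subtype_comap (measurableSet_singleton _).compl, lintegral_congr hpt,
    (volume : Measure (Euc N)).measurePreserving_homeomorphUnitSphereProd.lintegral_comp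
      (f := fun wr => H wr.1 * R wr.2) (by fun_prop),
    lintegral_prod_mul hHm.aemeasurable hRm.aemeasurable, hdim, lintegral_radial hN hq, mul_one,
    sphereK, ofReal_integral_eq_lintegral_ofReal]
  · exact hcont.integrable_of_hasCompactSupport (HasCompactSupport.of_compactSpace _)
  · exact Eventually.of_forall fun w => by positivity

/-- A reflection carries `‖a‖ • e` to `a` and preserves Lebesgue measure, so only `‖a‖` matters. -/
lemma lintegral_kernel_rotate {N : ℕ} (hN : 1 ≤ N) {s p : ℝ} (hs1 : s < 1) (hp : 0 < p)
    (e : Euc N) (he : ‖e‖ = 1) (a : Euc N) :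
    ∫⁻ z in ball (0 : Euc N) 1,
      ENNReal.ofReal (p * (1 - s) / ‖z‖ ^ (N : ℝ) * (|⟪z, a⟫| / ‖z‖ ^ s) ^ p) =
      ENNReal.ofReal (sphereK N p e * ‖a‖ ^ p) := by
  have hnorm : ‖‖a‖ • e‖ = ‖a‖ := by simp [norm_smul, he]
  have hK : sphereK N p (‖a‖ • e) = sphereK N p e * ‖a‖ ^ p := by
    rw [sphereK, sphereK, ← integral_mul_const]
    refine integral_congr_ae (Eventually.of_forall fun w => ?_)
    simp only [real_inner_smul_right, abs_mul, abs_norm]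
    rw [Real.mul_rpow (norm_nonneg _) (abs_nonneg _), mul_comm]
  rw [← hK, ← lintegral_kernel hN hs1 hp]
  set ρ := Submodule.reflection (ℝ ∙ (‖a‖ • e - a))ᗮ
  have hρ : ρ (‖a‖ • e) = a := Submodule.reflection_sub hnorm
  have hpre : ρ ⁻¹' ball (0 : Euc N) 1 = ball 0 1 := by ext z; simp
  rw [← ρ.measurePreserving.setLIntegral_comp_preimage_emb
    ρ.toHomeomorph.measurableEmbedding, hpre]
  refine lintegral_congr fun z => ?_
  rw [← hρ, ρ.inner_map_map, ρ.norm_map, hρ]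

/-! ### The difference quotient -/

lemma tendsto_slope {N : ℕ} {u : Euc N → ℝ} (hu : ContDiff ℝ 1 u) (x z : Euc N) :
    Tendsto (fun δ : ℝ => |u x - u (x + δ • z)| / δ) (𝓝[>] 0) (𝓝 |⟪z, gradient u x⟫|) := by
  have hd : HasGradientAt u (gradient u x) x :=
    ((hu.differentiable one_ne_zero) x).hasGradientAt
  have hl : HasLineDerivAt ℝ u ⟪gradient u x, z⟫ x z := by
    simpa using hd.hasFDerivAt.hasLineDerivAt z
  have h := (hl.tendsto_slope_zero_right).abs
  rw [real_inner_comm]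
  refine h.congr' ?_
  filter_upwards [self_mem_nhdsWithin] with δ hδ
  have hδ : 0 < δ := hδ
  rw [smul_eq_mul, abs_mul, abs_inv, abs_of_pos hδ, abs_sub_comm, inv_mul_eq_div]

lemma measurable_integrand {N : ℕ} {G : ℝ → ℝ} (hG : ContinuousOn G (Ici 0)) {u : Euc N → ℝ}
    (hu : Continuous u) (s : ℝ) (x : Euc N) :
    Measurable fun y =>
      ENNReal.ofReal (G (|u x - u y| / ‖x - y‖ ^ s) / ‖x - y‖ ^ (N : ℝ)) := by
  -- `G` is only controlled on `[0, ∞)`, so it is first extended by a constant to the left of `0`.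
  have hc : Continuous fun t => G (max 0 t) :=
    hG.comp_continuous (by fun_prop) fun t => mem_Ici.2 (le_max_left _ _)
  have heq : ∀ y, G (|u x - u y| / ‖x - y‖ ^ s) = G (max 0 (|u x - u y| / ‖x - y‖ ^ s)) :=
    fun y => by rw [max_eq_right (by positivity)]
  simp only [heq]
  have : Measurable fun y => G (max 0 (|u x - u y| / ‖x - y‖ ^ s)) :=
    hc.measurable.comp (by fun_prop)
  exact (this.div (by fun_prop)).ennreal_ofReal


/-- **Pointwise liminf inequality** (Proposition 3.6 / `prop_liminf`): for `u ∈ C¹(ℝ^N)`,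
`liminf_{δ→0⁺} [p(1-s)/G(δ^{1-s})] ∫_{B(x,δ)} G(…) dy ≥ K_{N,p}|∇u(x)|^p`. -/
theorem pointwise_liminf
    (N : ℕ) (hN : 1 ≤ N) (s : ℝ) (hs0 : 0 < s) (hs1 : s < 1)
    (G : ℝ → ℝ) (p : ℝ) (hG : HypH G p)
    (u : Euc N → ℝ) (hu : ContDiff ℝ 1 u)
    (e : Euc N) (he : ‖e‖ = 1) (x : Euc N) :
    ENNReal.ofReal (sphereK N p e * ‖gradient u x‖ ^ p) ≤
      Filter.liminf (fun δ : ℝ => ENNReal.ofReal (p * (1 - s) / G (δ ^ (1 - s))) *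
          ∫⁻ y in ball x δ,
            ENNReal.ofReal (G (|u x - u y| / ‖x - y‖ ^ s) / ‖x - y‖ ^ (N : ℝ)))
        (𝓝[>] (0:ℝ)) := by
  obtain ⟨hO, hR, -, -⟩ := hG
  have hp : 0 < p := by linarith [one_le_index hO hR]
  have hT : Tendsto (fun δ : ℝ => δ ^ (1 - s)) (𝓝[>] 0) (𝓝[>] 0) := by
    refine tendsto_nhdsWithin_iff.2 ⟨?_, ?_⟩
    · have := (Real.continuousAt_rpow_const 0 (1 - s) (Or.inr (by linarith))).tendsto
      rw [Real.zero_rpow (by linarith)] at this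
      exact this.mono_left nhdsWithin_le_nhds
    · filter_upwards [self_mem_nhdsWithin] with δ hδ
      exact Real.rpow_pos_of_pos hδ _
  set F : Euc N → ℝ≥0∞ := fun y =>
    ENNReal.ofReal (G (|u x - u y| / ‖x - y‖ ^ s) / ‖x - y‖ ^ (N : ℝ)) with hF
  have hFm : Measurable F := measurable_integrand hO.2.1 hu.continuous s x
  -- The energy density at scale `δ`, pulled back to the unit ball by `y = x + δ z`.
  set f : ℝ → Euc N → ℝ≥0∞ := fun δ z =>
    ENNReal.ofReal (p * (1 - s) / G (δ ^ (1 - s))) * (ENNReal.ofReal (δ ^ N) * F (x + δ • z))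
    with hf
  have hfm : ∀ δ, Measurable (f δ) := fun δ => by
    have : Measurable fun z => F (x + δ • z) := hFm.comp (by fun_prop)
    fun_prop
  have hresc : ∀ᶠ δ in 𝓝[>] (0 : ℝ), ∫⁻ z in ball (0 : Euc N) 1, f δ z =
      ENNReal.ofReal (p * (1 - s) / G (δ ^ (1 - s))) * ∫⁻ y in ball x δ, F y := by
    filter_upwards [self_mem_nhdsWithin] with δ hδ
    rw [setLIntegral_ball_dilate x hδ hFm, ← lintegral_const_mul' _ _ ENNReal.ofReal_ne_top,
      ← lintegral_const_mul' _ _ ENNReal.ofReal_ne_top]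
  rw [← lintegral_kernel_rotate hN hs1 hp e he, ← liminf_congr hresc]
  refine le_trans ?_ (lintegral_liminf_le hfm)
  have hne : ∀ᵐ z ∂(volume.restrict (ball (0 : Euc N) 1)), z ≠ 0 := by
    have : Nonempty (Fin N) := ⟨⟨0, hN⟩⟩
    exact ae_restrict_of_ae (Measure.ae_ne volume 0)
  refine lintegral_mono_ae ?_
  filter_upwards [hne] with z hz
  have hz0 : 0 < ‖z‖ := norm_pos_iff.2 hz
  have hC : 0 ≤ p * (1 - s) / ‖z‖ ^ (N : ℝ) :=
    div_nonneg (mul_nonneg hp.le (by linarith)) (by positivity)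
  refine (ofReal_le_liminf_ratio hO hR hT ((tendsto_slope hu x z).div_const (‖z‖ ^ s))
    (by positivity) hC).trans_eq (liminf_congr ?_)
  filter_upwards [self_mem_nhdsWithin] with δ hδ
  have hδ : 0 < δ := hδ
  have hGT : 0 < G (δ ^ (1 - s)) := Orlicz.pos hO (Real.rpow_pos_of_pos hδ _)
  have hxy : ‖x - (x + δ • z)‖ = δ * ‖z‖ := by simp [norm_smul, abs_of_pos hδ]
  have harg : |u x - u (x + δ • z)| / (δ * ‖z‖) ^ s =
      δ ^ (1 - s) * (|u x - u (x + δ • z)| / δ / ‖z‖ ^ s) := by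
    rw [Real.mul_rpow hδ.le hz0.le, Real.rpow_sub hδ, Real.rpow_one]
    field_simp
  simp only [hf, hF, hxy, harg]
  rw [← ENNReal.ofReal_mul (by positivity),
    ← ENNReal.ofReal_mul (div_nonneg (mul_nonneg hp.le (by linarith)) hGT.le)]
  congr 1
  rw [Real.mul_rpow hδ.le hz0.le, Real.rpow_natCast, Real.rpow_natCast]
  field_simp
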